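/- Let K be a real n×p matrix, H a real k×p matrix, and let C ⊆ ℝ^p be a convex cone (closed under addition and nonnegative scaling, containing 0). For x ∈ ℝ^p and ε ∈ ℝⁿ set T_x(ε) := inf{‖Kz − ε‖² : Hz = 0, z + x ∈ C}. Then for every x ∈ C and every ε ∈ ℝⁿ one has T_x(ε) ≤ T_0(ε); consequently, for the standard Gaussian measure γₙ on ℝⁿ and every t ∈ ℝ, γₙ{ε : T_x(ε) ≤ t} ≥ γₙ{ε : T_0(ε) ≤ t}, so the (1−α)-quantile of T_x is maximized over C at x = 0. -/

import Mathlib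

/-!
Since `C` is closed under addition and `x ∈ C`, any `z` feasible at `0` (that is, `H z = 0` and
`z ∈ C`) is also feasible at `x`. The infimum defining `T_x(ε)` therefore runs over a larger set
than the one defining `T_0(ε)`; as both sets are nonempty and bounded below by `0`, this gives
`T_x(ε) ≤ T_0(ε)`. The comparison of Gaussian measures is then monotonicity applied to the
inclusion `{T_0 ≤ t} ⊆ {T_x ≤ t}`.
-/

open Matrix MeasureTheory ProbabilityTheory

/-- Squared Euclidean norm on `Fin n → ℝ`. -/
noncomputable def sqNorm {n : ℕ} (v : Fin n → ℝ) : ℝ := ∑ i, (v i) ^ 2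

/-- The standard Gaussian measure on `ℝⁿ = (Fin n → ℝ)`. -/
noncomputable def stdGaussian (n : ℕ) : Measure (Fin n → ℝ) :=
  Measure.pi fun _ => gaussianReal 0 1

/-- The cone-constrained test statistic `T_x(ε) = inf{‖Kz − ε‖² : Hz = 0, z + x ∈ C}`. -/
noncomputable def TstatCone {n p k : ℕ} (K : Matrix (Fin n) (Fin p) ℝ)
    (H : Matrix (Fin k) (Fin p) ℝ) (C : Set (Fin p → ℝ))
    (x : Fin p → ℝ) (ε : Fin n → ℝ) : ℝ :=
  sInf {t : ℝ | ∃ z : Fin p → ℝ, H.mulVec z = 0 ∧ z + x ∈ C ∧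
    t = sqNorm (K.mulVec z - ε)}

/-- for a convex cone `C` (containing `0`, closed under addition and
nonnegative scaling) and every `x ∈ C`, `T_x(ε) ≤ T_0(ε)` for all `ε`; hence
`γₙ{T_x ≤ t} ≥ γₙ{T_0 ≤ t}` for every `t`, so the quantile is maximized at `x = 0`. -/
theorem stmt13 {n p k : ℕ} (K : Matrix (Fin n) (Fin p) ℝ) (H : Matrix (Fin k) (Fin p) ℝ)
    (C : Set (Fin p → ℝ)) (hC0 : (0 : Fin p → ℝ) ∈ C)
    (hCadd : ∀ u ∈ C, ∀ v ∈ C, u + v ∈ C)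
    (hCsmul : ∀ (c : ℝ), 0 ≤ c → ∀ v ∈ C, c • v ∈ C)
    (x : Fin p → ℝ) (hxC : x ∈ C) :
    (∀ ε : Fin n → ℝ, TstatCone K H C x ε ≤ TstatCone K H C 0 ε)
    ∧ ∀ t : ℝ,
        stdGaussian n {ε : Fin n → ℝ | TstatCone K H C 0 ε ≤ t}
          ≤ stdGaussian n {ε : Fin n → ℝ | TstatCone K H C x ε ≤ t} := by
  have hle : ∀ ε : Fin n → ℝ, TstatCone K H C x ε ≤ TstatCone K H C 0 ε := by
    intro ε
    refine csInf_le_csInf ⟨0, ?_⟩ ⟨sqNorm (K.mulVec 0 - ε), 0, by simp, by simpa using hC0, rfl⟩ ?_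
    · rintro _ ⟨z, -, -, rfl⟩
      exact Finset.sum_nonneg fun i _ => sq_nonneg _
    · rintro _ ⟨z, hHz, hzC, rfl⟩
      exact ⟨z, hHz, hCadd z (by simpa using hzC) x hxC, rfl⟩
  exact ⟨hle, fun t => measure_mono fun ε hε => (hle ε).trans hε⟩
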